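/- arXiv:2012.08878 — 2 statements merged into one kernel-verified Lean document; each statement's English description precedes it below -/
import Mathlib

section
/- Let P be a set of strings over Σ. Suppose w₀ is a linear superstring of P of minimum length (i.e., every linear superstring w of P satisfies w₀.length ≤ w.length) and c₀ is a circular superstring of f(P) of minimum length (i.e., every circular superstring c of f(P) satisfies c₀.length ≤ c.length). Then c₀.length = 2 * w₀.length. -/
/-- `lift w` embeds a string over `α` into the barred alphabet `α ⊕ α` using unbarred letters. -/
def lift {α : Type*} (w : List α) : List (α ⊕ α) := w.map Sum.inl

/-- `bar w` embeds a string over `α` into the barred alphabet `α ⊕ α` using barred letters. -/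
def bar {α : Type*} (w : List α) : List (α ⊕ α) := w.map Sum.inr

/-- `f(P) = {lift s | s ∈ P} ∪ {bar s | s ∈ P}`. -/
def barred {α : Type*} (P : Set (List α)) : Set (List (α ⊕ α)) := (lift '' P) ∪ (bar '' P)

/-- A linear superstring of `P` contains every string of `P` as an infix. -/
def IsLinearSuperstring {β : Type*} (P : Set (List β)) (w : List β) : Prop := ∀ s ∈ P, s <:+: w

/-- `s` is a circular substring of the circular string `c` if `s` is an infix of `c^n`
for some `n ≥ 1`. -/
def IsCircularSubstring {β : Type*} (c s : List β) : Prop :=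
  ∃ n, 1 ≤ n ∧ s <:+: (List.replicate n c).flatten

/-- A circular superstring of `P` has every string of `P` as a circular substring. -/
def IsCircularSuperstring {β : Type*} (P : Set (List β)) (c : List β) : Prop :=
  ∀ s ∈ P, IsCircularSubstring c s

/-- The `Σ`-restriction of a string over the barred alphabet: keep the unbarred letters. -/
def restrict {α : Type*} (d : List (α ⊕ α)) : List α :=
  d.filterMap (Sum.elim some (fun _ => none))

/-!
Concatenating an unbarred and a barred copy of a linear superstring of `P` gives a circular
superstring of `f(P)` of twice the length. Conversely, suppose a circular superstring `c` of `f(P)`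
contains a barred letter (otherwise `P` has no nonempty string). No string `lift s` runs across that
letter, so all of them already occur in the linear string obtained by cutting `c` there, and erasing
the barred letters leaves a linear superstring of `P`. By symmetry the barred letters of `c` give a
linear superstring of `P` as well, so the shorter of the two has length at most half that of `c`.
-/

section CircularSubstring

variable {β γ : Type*} {c s u v : List β} {x : β}

theorem infix_append_cons_iff_of_notMem (hx : x ∉ s) :
    s <:+: u ++ x :: v ↔ s <:+: u ∨ s <:+: v := by
  have eq_nil_of_prefix {t : List β} (hxt : x ∉ t) (ht : t <+: x :: v) : t = [] := by
    rcases List.prefix_cons_iff.1 ht with rfl | ⟨r, rfl, -⟩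
    · rfl
    · exact absurd List.mem_cons_self hxt
  constructor
  · intro h
    rcases List.infix_append_iff.1 h with hu | hxv | ⟨p, q, rfl, hp, hq⟩
    · exact .inl hu
    · rcases List.infix_cons_iff.1 hxv with hpre | hv
      · exact .inl (eq_nil_of_prefix hx hpre ▸ List.nil_infix)
      · exact .inr hv
    · obtain rfl := eq_nil_of_prefix (fun h => hx (List.mem_append_right p h)) hq
      exact .inl (by simpa using hp.isInfix)
  · rintro (hu | hv)
    · exact List.infix_append_of_infix_left hu
    · exact List.infix_append_of_infix_right (List.infix_cons hv)

theorem append_flatten_replicate_append (u v : List β) (n : ℕ) :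
    v ++ (List.replicate n (u ++ v)).flatten ++ u = (List.replicate (n + 1) (v ++ u)).flatten := by
  induction n with
  | zero => simp
  | succ n ih =>
    rw [List.replicate_succ, List.replicate_succ, List.flatten_cons, List.flatten_cons, ← ih]
    simp only [List.append_assoc]

theorem isCircularSubstring_of_infix (h : s <:+: c) : IsCircularSubstring c s :=
  ⟨1, le_rfl, by simpa using h⟩

namespace IsCircularSubstring

theorem mem (h : IsCircularSubstring c s) (hx : x ∈ s) : x ∈ c := by
  obtain ⟨n, -, hs⟩ := h
  obtain ⟨l, hl, hxl⟩ := List.mem_flatten.1 (hs.subset hx)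
  exact List.eq_of_mem_replicate hl ▸ hxl

theorem map (h : IsCircularSubstring c s) (g : β → γ) :
    IsCircularSubstring (c.map g) (s.map g) := by
  obtain ⟨n, hn, hs⟩ := h
  exact ⟨n, hn, by simpa only [List.map_flatten, List.map_replicate] using hs.map g⟩

theorem append_comm (h : IsCircularSubstring (u ++ v) s) : IsCircularSubstring (v ++ u) s := by
  obtain ⟨n, -, hs⟩ := h
  refine ⟨n + 1, n.succ_pos, ?_⟩
  rw [← append_flatten_replicate_append]
  exact hs.trans (List.infix_append _ _ _)

theorem infix_of_notMem (h : IsCircularSubstring (x :: v) s) (hx : x ∉ s) : s <:+: v := by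
  have infix_of_infix_append (n : ℕ) (hs : s <:+: v ++ (List.replicate n (x :: v)).flatten) :
      s <:+: v := by
    induction n with
    | zero => simpa using hs
    | succ n ih =>
      rw [List.replicate_succ, List.flatten_cons, List.cons_append,
        infix_append_cons_iff_of_notMem hx] at hs
      exact hs.elim id ih
  obtain ⟨n, -, hs⟩ := h
  exact infix_of_infix_append n (List.infix_append_of_infix_right hs)

end IsCircularSubstring

theorem IsLinearSuperstring.isCircularSuperstring {Q : Set (List β)}
    (h : IsLinearSuperstring Q c) : IsCircularSuperstring Q c :=
  fun s hs => isCircularSubstring_of_infix (h s hs)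

end CircularSubstring

section Barred

variable {α : Type*} {P : Set (List α)}

theorem restrict_lift (w : List α) : restrict (lift w) = w := by
  simp [restrict, lift, List.filterMap_map, Function.comp_def]

theorem restrict_append (c d : List (α ⊕ α)) : restrict (c ++ d) = restrict c ++ restrict d :=
  List.filterMap_append

theorem restrict_inl_cons (a : α) (c : List (α ⊕ α)) :
    restrict (Sum.inl a :: c) = a :: restrict c :=
  rfl

theorem restrict_inr_cons (a : α) (c : List (α ⊕ α)) : restrict (Sum.inr a :: c) = restrict c :=
  rfl

theorem length_restrict_add_length_restrict_map_swap (c : List (α ⊕ α)) :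
    (restrict c).length + (restrict (c.map Sum.swap)).length = c.length := by
  induction c with
  | nil => rfl
  | cons y c ih =>
    cases y <;>
      simp only [List.map_cons, Sum.swap_inl, Sum.swap_inr, restrict_inl_cons, restrict_inr_cons,
        List.length_cons] <;> omega

theorem map_swap_lift (w : List α) : (lift w).map Sum.swap = bar w := by
  simp [lift, bar]

theorem map_swap_bar (w : List α) : (bar w).map Sum.swap = lift w := by
  simp [lift, bar]

theorem IsLinearSuperstring.lift_append_bar {w : List α} (h : IsLinearSuperstring P w) :
    IsLinearSuperstring (barred P) (lift w ++ bar w) := by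
  rintro _ (⟨s, hs, rfl⟩ | ⟨s, hs, rfl⟩)
  · exact List.infix_append_of_infix_left ((h s hs).map Sum.inl)
  · exact List.infix_append_of_infix_right ((h s hs).map Sum.inr)

theorem IsCircularSuperstring.map_swap {c : List (α ⊕ α)}
    (hc : IsCircularSuperstring (barred P) c) :
    IsCircularSuperstring (barred P) (c.map Sum.swap) := by
  rintro _ (⟨s, hs, rfl⟩ | ⟨s, hs, rfl⟩)
  · exact map_swap_bar s ▸ (hc (bar s) (.inr ⟨s, hs, rfl⟩)).map Sum.swap
  · exact map_swap_lift s ▸ (hc (lift s) (.inl ⟨s, hs, rfl⟩)).map Sum.swap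

theorem IsCircularSubstring.infix_restrict_of_lift {u v : List (α ⊕ α)} {b : α} {s : List α}
    (h : IsCircularSubstring (u ++ Sum.inr b :: v) (lift s)) : s <:+: restrict (v ++ u) := by
  have inr_notMem : Sum.inr b ∉ lift s := by simp [lift]
  have lift_infix : lift s <:+: v ++ u := h.append_comm.infix_of_notMem inr_notMem
  have restrict_infix : restrict (lift s) <:+: restrict (v ++ u) := lift_infix.filterMap _
  rwa [restrict_lift] at restrict_infix

theorem IsCircularSuperstring.exists_isRotated_restrict {c : List (α ⊕ α)}
    (hc : IsCircularSuperstring (barred P) c) :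
    ∃ w, w ~r restrict c ∧ IsLinearSuperstring P w := by
  by_cases hbar : ∃ b, Sum.inr b ∈ c
  · obtain ⟨b, hb⟩ := hbar
    obtain ⟨u, v, rfl⟩ := List.append_of_mem hb
    refine ⟨restrict (v ++ u), ?_, fun s hs => (hc _ (.inl ⟨s, hs, rfl⟩)).infix_restrict_of_lift⟩
    rw [restrict_append, restrict_append, restrict_inr_cons]
    exact List.isRotated_append
  · refine ⟨restrict c, .refl _, fun s hs => ?_⟩
    have eq_nil : s = [] := List.eq_nil_iff_forall_not_mem.2 fun a ha =>
      hbar ⟨a, (hc (bar s) (.inr ⟨s, hs, rfl⟩)).mem (List.mem_map_of_mem ha)⟩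
    exact eq_nil ▸ List.nil_infix

end Barred

/-- The length of a shortest circular superstring of `f(P)` is twice the length of a shortest
linear superstring of `P`. -/
theorem shortest_circular_eq_two_mul_shortest_linear {α : Type*} (P : Set (List α))
    (w₀ : List α) (hw₀ : IsLinearSuperstring P w₀)
    (hw₀min : ∀ w : List α, IsLinearSuperstring P w → w₀.length ≤ w.length)
    (c₀ : List (α ⊕ α)) (hc₀ : IsCircularSuperstring (barred P) c₀)
    (hc₀min : ∀ c : List (α ⊕ α), IsCircularSuperstring (barred P) c → c₀.length ≤ c.length) :
    c₀.length = 2 * w₀.length := by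
  apply le_antisymm
  · calc c₀.length ≤ (lift w₀ ++ bar w₀).length :=
          hc₀min _ hw₀.lift_append_bar.isCircularSuperstring
      _ = 2 * w₀.length := by simp [lift, bar, two_mul]
  · obtain ⟨u, hu, hPu⟩ := hc₀.exists_isRotated_restrict
    obtain ⟨v, hv, hPv⟩ := hc₀.map_swap.exists_isRotated_restrict
    calc 2 * w₀.length = w₀.length + w₀.length := two_mul _
      _ ≤ u.length + v.length := add_le_add (hw₀min u hPu) (hw₀min v hPv)
      _ = (restrict c₀).length + (restrict (c₀.map Sum.swap)).length := by
          rw [hu.perm.length_eq, hv.perm.length_eq]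
      _ = c₀.length := length_restrict_add_length_restrict_map_swap c₀
end

section
/- Let P be a finite set of nonempty strings over Σ such that no string of P is an infix of another string of P, and let F be the finite set f(P) = {lift s | s ∈ P} ∪ {bar s | s ∈ P} over Σ ⊕ Σ. If w is a greedy linear superstring of F (GreedySup F w), then w has no nonempty proper self-overlap: every list t that is both a prefix of w and a suffix of w with t ≠ w is the empty list (i.e., ov(w,w) = 0). -/
/-- `ov x y`: the maximum length of a list that is simultaneously a proper suffix of `x`
and a proper prefix of `y`. -/
def ov {α : Type*} [DecidableEq α] (x y : List α) : ℕ :=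
  Nat.findGreatest
    (fun k => k < x.length ∧ k < y.length ∧ x.drop (x.length - k) = y.take k)
    (min x.length y.length)

/-- `merge x y = x ⊙ y`, the merge of `x` onto `y` along their longest overlap. -/
def merge {α : Type*} [DecidableEq α] (x y : List α) : List α := x ++ y.drop (ov x y)

/-- `GreedySup Q z`: `z` is a possible output of the greedy superstring algorithm on the
finite set `Q` of strings. -/
inductive GreedySup {α : Type*} [DecidableEq α] : Finset (List α) → List α → Prop
  | single (w : List α) : GreedySup {w} w
  | step {Q : Finset (List α)} {z : List α} (u v : List α) (hu : u ∈ Q) (hv : v ∈ Q)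
      (hne : u ≠ v) (hmax : ∀ x ∈ Q, ∀ y ∈ Q, x ≠ y → ov x y ≤ ov u v)
      (hrec : GreedySup ((Q \ {u, v}) ∪ {merge u v}) z) : GreedySup Q z

/-!
Call a set of strings infix-free if none of them is an infix of another. A greedy merge preserves
infix-freeness: a string that became an infix of `u ⊙ v` without being one of `u` or of `v` would
overlap `u` more than `v` does.

Suppose moreover that an infix-free set splits into two nonempty parts such that no string of one
overlaps a string of the other. Merging inside a part creates no overlap across the split, since an
overlap of `u ⊙ v` with a string incomparable to `u` and `v` is already an overlap of `u` or of `v`.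
So when a merge finally joins the two parts, the maximal overlap, and hence every overlap, is zero;
from then on strings are merely concatenated, and `u ++ v` is unbordered as soon as `u` and `v` are
incomparable and do not overlap. The two copies of `P` in `f(P)` form such a split, having no letter
in common.
-/

theorem not_infix_of_disjoint {α : Type*} {x y : List α} (hx : x ≠ []) (h : x.Disjoint y) :
    ¬ x <:+: y := by
  obtain ⟨c, hc⟩ := List.exists_mem_of_ne_nil x hx
  exact fun hinf => h hc (hinf.subset hc)

section Overlap

variable {α : Type*} [DecidableEq α] {s t u v w x y : List α}

theorem exists_eq_append_merge (x y : List α) :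
    ∃ a t b, x = a ++ t ∧ y = t ++ b ∧ t.length = ov x y ∧ merge x y = a ++ t ++ b := by
  obtain ⟨hy, htake⟩ : ov x y ≤ y.length ∧ x.drop (x.length - ov x y) = y.take (ov x y) := by
    by_cases h : ov x y = 0
    · simp [h]
    · obtain ⟨-, hy, htake⟩ := Nat.findGreatest_of_ne_zero (m := ov x y) rfl h
      exact ⟨hy.le, htake⟩
  refine ⟨x.take (x.length - ov x y), y.take (ov x y), y.drop (ov x y), ?_, ?_, ?_, ?_⟩
  · rw [← htake, List.take_append_drop]
  · rw [List.take_append_drop]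
  · exact List.length_take_of_le hy
  · rw [← htake, List.take_append_drop, merge]

theorem prefix_merge (u v : List α) : u <+: merge u v :=
  List.prefix_append u _

theorem suffix_merge (u v : List α) : v <:+ merge u v := by
  obtain ⟨a, t, b, -, rfl, -, hm⟩ := exists_eq_append_merge u v
  exact ⟨a, by rw [hm, List.append_assoc]⟩

theorem merge_eq_append (h : ov u v = 0) : merge u v = u ++ v := by
  rw [merge, h, List.drop_zero]

theorem length_le_ov (hxy : IncompRel (· <:+: ·) x y) (hx : t <:+ x) (hy : t <+: y) :
    t.length ≤ ov x y := by
  have hltx : t.length < x.length := by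
    refine hx.length_le.lt_of_ne fun h => hxy.1 ?_
    exact hx.eq_of_length h ▸ hy.isInfix
  have hlty : t.length < y.length := by
    refine hy.length_le.lt_of_ne fun h => hxy.2 ?_
    exact hy.eq_of_length h ▸ hx.isInfix
  refine Nat.le_findGreatest (le_min hltx.le hlty.le) ⟨hltx, hlty, ?_⟩
  rw [← List.suffix_iff_eq_drop.1 hx, ← List.prefix_iff_eq_take.1 hy]

theorem eq_nil_of_ov_eq_zero (h : ov x y = 0) (hxy : IncompRel (· <:+: ·) x y)
    (hx : t <:+ x) (hy : t <+: y) : t = [] :=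
  List.eq_nil_of_length_eq_zero (Nat.le_zero.1 (h ▸ length_le_ov hxy hx hy))

theorem ov_eq_zero_of_forall_eq_nil (h : ∀ t, t <:+ x → t <+: y → t = []) : ov x y = 0 := by
  obtain ⟨a, t, b, rfl, rfl, ht, -⟩ := exists_eq_append_merge x y
  rw [← ht, h t (List.suffix_append a t) (List.prefix_append t b), List.length_nil]

theorem ov_eq_zero_of_disjoint (h : x.Disjoint y) : ov x y = 0 :=
  ov_eq_zero_of_forall_eq_nil fun _ hx hy =>
    List.eq_nil_iff_forall_not_mem.2 fun _ hc => h (hx.subset hc) (hy.subset hc)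

theorem ov_eq_zero_of_suffix (hvw : v <:+ w) (h : ov v x = 0)
    (hvx : IncompRel (· <:+: ·) v x) : ov w x = 0 := by
  refine ov_eq_zero_of_forall_eq_nil fun t htw htx => ?_
  rcases List.suffix_or_suffix_of_suffix htw hvw with htv | hvt
  · exact eq_nil_of_ov_eq_zero h hvx htv htx
  · exact absurd (hvt.isInfix.trans htx.isInfix) hvx.1

theorem ov_eq_zero_of_prefix (huw : u <+: w) (h : ov x u = 0)
    (hxu : IncompRel (· <:+: ·) x u) : ov x w = 0 := by
  refine ov_eq_zero_of_forall_eq_nil fun t htx htw => ?_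
  rcases List.prefix_or_prefix_of_prefix htw huw with htu | hut
  · exact eq_nil_of_ov_eq_zero h hxu htx htu
  · exact absurd (hut.isInfix.trans htx.isInfix) hxu.2

theorem ov_lt_ov_of_infix_merge (hs : s <:+: merge u v) (hus : IncompRel (· <:+: ·) u s)
    (hsv : ¬ s <:+: v) : ov u v < ov u s := by
  obtain ⟨a, t, b, rfl, rfl, ht, hm⟩ := exists_eq_append_merge u v
  rw [hm, List.infix_append_iff] at hs
  rcases hs with hsu | hsb | ⟨p, q, rfl, hp, hq⟩
  · exact absurd hsu hus.2
  · exact absurd (List.infix_append_of_infix_right hsb) hsv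
  have hpt : ¬ p <:+ t := fun hpt => hsv <|
    List.infix_append_iff.2 (.inr (.inr ⟨p, q, rfl, hpt, hq⟩))
  have htp : t.length < p.length := by
    by_contra! hle
    exact hpt (List.suffix_of_suffix_length_le hp (List.suffix_append a t) hle)
  exact ht ▸ htp.trans_le (length_le_ov hus hp (List.prefix_append p q))

end Overlap

/-- A string is unbordered (has no proper self-overlap) if the empty list is its only proper
prefix that is also a suffix; the empty string counts as unbordered. -/
def Unbordered {α : Type*} (w : List α) : Prop :=
  ∀ t : List α, t <+: w → t <:+ w → t ≠ w → t = []

theorem unbordered_append {α : Type*} [DecidableEq α] {u v : List α}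
    (huv : IncompRel (· <:+: ·) u v) (h₁ : ov u v = 0) (h₂ : ov v u = 0) :
    Unbordered (u ++ v) := by
  intro t hpre hsuf hne
  rcases List.prefix_or_prefix_of_prefix hpre (List.prefix_append u v) with htu | hut <;>
    rcases List.suffix_or_suffix_of_suffix hsuf (List.suffix_append u v) with htv | hvt
  · exact eq_nil_of_ov_eq_zero h₂ huv.symm htv htu
  · exact absurd (hvt.isInfix.trans htu.isInfix) huv.2
  · exact absurd (hut.isInfix.trans htv.isInfix) huv.1
  -- Here `u` and `v` cover `t`; were `t` shorter than `u ++ v`, they would overlap inside it.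
  · exfalso
    obtain ⟨e, rfl⟩ := hut
    obtain ⟨g, hg⟩ := hvt
    rcases List.append_eq_append_iff.1 hg with ⟨h, rfl, rfl⟩ | ⟨h, rfl, rfl⟩
    · have hnil : h = [] :=
        eq_nil_of_ov_eq_zero h₁ huv (List.suffix_append g h) (List.prefix_append h e)
      simp [hnil] at hne
    · exact hne (hpre.eq_of_length_le (by simp))

theorem incompRel_of_isAntichain {β : Type*} {r : β → β → Prop} {S : Set β} {x y : β}
    (hS : IsAntichain r S) (hx : x ∈ S) (hy : y ∈ S) (hxy : x ≠ y) : IncompRel r x y :=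
  ⟨hS hx hy hxy, hS hy hx hxy.symm⟩

section Antichain

variable {α : Type*} [DecidableEq α] {Q : Finset (List α)} {u v : List α}

theorem merge_notMem_sdiff (hQ : IsAntichain (· <:+: ·) (Q : Set (List α))) (hu : u ∈ Q) :
    merge u v ∉ Q \ {u, v} := by
  intro hm
  obtain ⟨hmQ, hmuv⟩ := Finset.mem_sdiff.1 hm
  have huQ : u = merge u v := hQ.eq hu hmQ (prefix_merge u v).isInfix
  exact hmuv (by simp [← huQ])

theorem isAntichain_sdiff_union_merge (hQ : IsAntichain (· <:+: ·) (Q : Set (List α)))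
    (hu : u ∈ Q) (hv : v ∈ Q) (hmax : ∀ x ∈ Q, ∀ y ∈ Q, x ≠ y → ov x y ≤ ov u v) :
    IsAntichain (· <:+: ·) ((Q \ {u, v} ∪ {merge u v} : Finset (List α)) : Set (List α)) := by
  rw [Finset.coe_union, Finset.coe_singleton, Set.union_singleton]
  refine (hQ.subset (Finset.coe_subset.2 Finset.sdiff_subset)).insert ?_ ?_ <;>
    intro x hx _ hinf <;>
    obtain ⟨hxQ, hxu, hxv⟩ : x ∈ Q ∧ x ≠ u ∧ x ≠ v := by simpa using hx
  · have hux := incompRel_of_isAntichain hQ hu hxQ hxu.symm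
    have hlt : ov u v < ov u x := ov_lt_ov_of_infix_merge hinf hux (hQ hxQ hv hxv)
    exact hlt.not_ge (hmax u hu x hxQ hxu.symm)
  · exact hQ hu hxQ hxu.symm ((prefix_merge u v).isInfix.trans hinf)

end Antichain

/-- A splitting of the finite set `Q` of strings into two nonempty parts `A` and `B` such that no
string of one part overlaps a string of the other, in either order: the overlap graph of `Q` is
disconnected. -/
structure IsOverlapSplit {α : Type*} [DecidableEq α] (Q A B : Finset (List α)) : Prop where
  union_eq : A ∪ B = Q
  disjoint : Disjoint A B
  left_nonempty : A.Nonempty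
  right_nonempty : B.Nonempty
  ov_left_right : ∀ x ∈ A, ∀ y ∈ B, ov x y = 0
  ov_right_left : ∀ y ∈ B, ∀ x ∈ A, ov y x = 0

namespace IsOverlapSplit

variable {α : Type*} [DecidableEq α] {Q A B : Finset (List α)} {u v : List α}

theorem of_disjoint (hA : A.Nonempty) (hB : B.Nonempty) (hnil : [] ∉ A)
    (h : ∀ x ∈ A, ∀ y ∈ B, x.Disjoint y) : IsOverlapSplit (A ∪ B) A B where
  union_eq := rfl
  disjoint := Finset.disjoint_left.2 fun x hxA hxB =>
    not_infix_of_disjoint (ne_of_mem_of_not_mem hxA hnil) (h x hxA x hxB) List.infix_rfl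
  left_nonempty := hA
  right_nonempty := hB
  ov_left_right x hx y hy := ov_eq_zero_of_disjoint (h x hx y hy)
  ov_right_left y hy x hx := ov_eq_zero_of_disjoint (h x hx y hy).symm

theorem symm (h : IsOverlapSplit Q A B) : IsOverlapSplit Q B A where
  union_eq := Finset.union_comm B A ▸ h.union_eq
  disjoint := h.disjoint.symm
  left_nonempty := h.right_nonempty
  right_nonempty := h.left_nonempty
  ov_left_right := h.ov_right_left
  ov_right_left := h.ov_left_right

theorem left_subset (h : IsOverlapSplit Q A B) : A ⊆ Q :=
  h.union_eq ▸ Finset.subset_union_left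

theorem right_subset (h : IsOverlapSplit Q A B) : B ⊆ Q :=
  h.union_eq ▸ Finset.subset_union_right

theorem ne (h : IsOverlapSplit Q A B) {x y : List α} (hx : x ∈ A) (hy : y ∈ B) : x ≠ y :=
  h.disjoint.forall_ne_finset hx hy

theorem nontrivial (h : IsOverlapSplit Q A B) : Q.Nontrivial := by
  obtain ⟨x, hx⟩ := h.left_nonempty
  obtain ⟨y, hy⟩ := h.right_nonempty
  exact ⟨x, h.left_subset hx, y, h.right_subset hy, h.ne hx hy⟩

theorem merge_left (h : IsOverlapSplit Q A B) (hQ : IsAntichain (· <:+: ·) (Q : Set (List α)))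
    (hu : u ∈ A) (hv : v ∈ A) :
    IsOverlapSplit (Q \ {u, v} ∪ {merge u v}) (A \ {u, v} ∪ {merge u v}) B := by
  have hincomp : ∀ x ∈ A, ∀ y ∈ B, IncompRel (· <:+: ·) x y := fun x hx y hy =>
    incompRel_of_isAntichain hQ (h.left_subset hx) (h.right_subset hy) (h.ne hx hy)
  have hB : Disjoint B {u, v} :=
    h.symm.disjoint.mono_right (Finset.insert_subset hu (Finset.singleton_subset_iff.2 hv))
  refine ⟨?_, ?_, ⟨merge u v, by simp⟩, h.right_nonempty, ?_, ?_⟩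
  · rw [Finset.union_right_comm, ← h.union_eq, Finset.union_sdiff_distrib,
      Finset.sdiff_eq_self_of_disjoint hB]
  · rw [Finset.disjoint_union_left, Finset.disjoint_singleton_left]
    exact ⟨h.disjoint.mono_left Finset.sdiff_subset,
      fun hm => merge_notMem_sdiff hQ (h.left_subset hu)
        (Finset.mem_sdiff.2 ⟨h.right_subset hm, Finset.disjoint_left.1 hB hm⟩)⟩
  · intro x hx y hy
    rcases Finset.mem_union.1 hx with hx | hx
    · exact h.ov_left_right x (Finset.sdiff_subset hx) y hy
    · rw [Finset.mem_singleton.1 hx]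
      exact ov_eq_zero_of_suffix (suffix_merge u v) (h.ov_left_right v hv y hy)
        (hincomp v hv y hy)
  · intro y hy x hx
    rcases Finset.mem_union.1 hx with hx | hx
    · exact h.ov_right_left y hy x (Finset.sdiff_subset hx)
    · rw [Finset.mem_singleton.1 hx]
      exact ov_eq_zero_of_prefix (prefix_merge u v) (h.ov_right_left y hy u hu)
        (hincomp u hu y hy).symm

theorem merge_singleton (hQ : IsAntichain (· <:+: ·) (Q : Set (List α)))
    (h0 : (Q : Set (List α)).Pairwise fun x y => ov x y = 0) (hu : u ∈ Q) (hv : v ∈ Q)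
    (hrest : (Q \ {u, v}).Nonempty) :
    IsOverlapSplit (Q \ {u, v} ∪ {merge u v}) (Q \ {u, v}) {merge u v} := by
  refine ⟨rfl, ?_, hrest, Finset.singleton_nonempty _, ?_, ?_⟩
  · exact Finset.disjoint_singleton_right.2 (merge_notMem_sdiff hQ hu)
  all_goals
    simp only [Finset.mem_singleton, forall_eq, Finset.mem_sdiff, Finset.mem_insert, not_or]
    rintro x ⟨hx, hxu, hxv⟩
  · exact ov_eq_zero_of_prefix (prefix_merge u v) (h0 hx hu hxu)
      (incompRel_of_isAntichain hQ hx hu hxu)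
  · exact ov_eq_zero_of_suffix (suffix_merge u v) (h0 hv hx (Ne.symm hxv))
      (incompRel_of_isAntichain hQ hv hx (Ne.symm hxv))

end IsOverlapSplit

namespace GreedySup

variable {α : Type*} [DecidableEq α] {Q A B : Finset (List α)} {w z : List α}

theorem nonempty (h : GreedySup Q z) : Q.Nonempty := by
  cases h with
  | single => exact Finset.singleton_nonempty z
  | step u _ hu => exact ⟨u, hu⟩

theorem eq_of_singleton (h : GreedySup {w} z) : z = w := by
  generalize hQ : ({w} : Finset (List α)) = Q at h
  cases h with
  | single => exact (Finset.singleton_injective hQ).symm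
  | step u v hu hv hne =>
    subst hQ
    exact absurd ((Finset.mem_singleton.1 hu).trans (Finset.mem_singleton.1 hv).symm) hne

theorem unbordered_of_isOverlapSplit (h : GreedySup Q z)
    (hQ : IsAntichain (· <:+: ·) (Q : Set (List α))) (hAB : IsOverlapSplit Q A B) :
    Unbordered z := by
  induction h generalizing A B with
  | single w => exact absurd hAB.nontrivial Finset.not_nontrivial_singleton
  | @step Q z u v hu hv hne hmax hrec ih =>
    have hQ' := isAntichain_sdiff_union_merge hQ hu hv hmax
    wlog huA : u ∈ A generalizing A B
    · rw [← hAB.union_eq, Finset.mem_union] at hu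
      exact this hAB.symm (hu.resolve_left huA)
    by_cases hvA : v ∈ A
    · exact ih hQ' (hAB.merge_left hQ huA hvA)
    have hvB : v ∈ B := (Finset.mem_union.1 (hAB.union_eq ▸ hv)).resolve_left hvA
    have huv : ov u v = 0 := hAB.ov_left_right u huA v hvB
    have h0 : (Q : Set (List α)).Pairwise fun x y => ov x y = 0 := fun x hx y hy hxy =>
      Nat.le_zero.1 (huv ▸ hmax x hx y hy hxy)
    rcases (Q \ {u, v}).eq_empty_or_nonempty with hrest | hrest
    · rw [hrest, Finset.empty_union] at hrec
      rw [hrec.eq_of_singleton, merge_eq_append huv]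
      exact unbordered_append (incompRel_of_isAntichain hQ hu hv hne) huv (h0 hv hu hne.symm)
    · exact ih hQ' (.merge_singleton hQ h0 hu hv hrest)

end GreedySup

section Barred

variable {α : Type*} {P : Finset (List α)}

theorem isAntichain_infix_image_map {β : Type*} {f : α → β} (hf : Function.Injective f)
    {S : Set (List α)} (hS : IsAntichain (· <:+: ·) S) :
    IsAntichain (· <:+: ·) (List.map f '' S) := by
  refine hS.image (List.map f) fun s t h => ?_
  obtain ⟨l, hlt, hl⟩ := List.infix_map_iff.1 h
  rwa [List.map_injective_iff.2 hf hl]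

theorem disjoint_lift_bar (s t : List α) : (lift s).Disjoint (bar t) := by
  simp [lift, bar, List.Disjoint]

theorem isAntichain_image_lift_union_image_bar [DecidableEq α] (hne : ∀ s ∈ P, s ≠ [])
    (hP : IsAntichain (· <:+: ·) (P : Set (List α))) :
    IsAntichain (· <:+: ·)
      ((P.image lift ∪ P.image bar : Finset (List (α ⊕ α))) : Set (List (α ⊕ α))) := by
  rw [Finset.coe_union, Finset.coe_image, Finset.coe_image, isAntichain_union]
  refine ⟨isAntichain_infix_image_map Sum.inl_injective hP,
    isAntichain_infix_image_map Sum.inr_injective hP, ?_⟩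
  rintro _ ⟨s, hs, rfl⟩ _ ⟨t, ht, rfl⟩ _
  have hdisj := disjoint_lift_bar s t
  exact ⟨not_infix_of_disjoint (by simpa [lift] using hne s hs) hdisj,
    not_infix_of_disjoint (by simpa [bar] using hne t ht) hdisj.symm⟩

theorem isOverlapSplit_image_lift_image_bar [DecidableEq α] (hne : ∀ s ∈ P, s ≠ [])
    (hP : P.Nonempty) :
    IsOverlapSplit (P.image lift ∪ P.image bar) (P.image lift) (P.image bar) := by
  refine .of_disjoint (hP.image lift) (hP.image bar) ?_ ?_
  · simpa [lift] using fun h : [] ∈ P => hne [] h rfl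
  · simp only [Finset.forall_mem_image]
    exact fun s _ t _ => disjoint_lift_bar s t

end Barred

/-- A greedy linear superstring of `f(P)` has no nonempty proper self-overlap. -/
theorem greedySup_barred_no_self_overlap {α : Type*} [DecidableEq α] (P : Finset (List α))
    (hne : ∀ s ∈ P, s ≠ ([] : List α))
    (hinf : ∀ s ∈ P, ∀ t ∈ P, s ≠ t → ¬ s <:+: t)
    (w : List (α ⊕ α)) (hw : GreedySup (P.image lift ∪ P.image bar) w) :
    ∀ t : List (α ⊕ α), t <+: w → t <:+ w → t ≠ w → t = [] := by
  have hP : IsAntichain (· <:+: ·) (P : Set (List α)) := hinf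
  have hP_nonempty : P.Nonempty := by
    simpa [Finset.union_nonempty] using hw.nonempty
  exact hw.unbordered_of_isOverlapSplit (isAntichain_image_lift_union_image_bar hne hP)
    (isOverlapSplit_image_lift_image_bar hne hP_nonempty)
end
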